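/- Loewner sandwich for the sketched Gram inverse (Lemma F.6): Let χ ∈ (0, 1], let A ∈ ℝ^{n×d} with AᵀA positive definite, let k ∈ ℕ, and let B ∈ ℝ^{k×n} be a χ-embedding sketch for A. Then in the Loewner order, (1/(1 + χ/2))·(AᵀA)⁻¹ ⪯ ((1/k)·(BA)ᵀ(BA))⁻¹ ⪯ (1/(1 − χ/2))·(AᵀA)⁻¹. Furthermore, for every vector v ∈ ℝ^d, k² · ( ((BA)ᵀ(BA))⁻¹ v )ᵀ (AᵀA) ( ((BA)ᵀ(BA))⁻¹ v ) ≤ ‖v‖² / ( (1 − χ/2)² · λ_min(AᵀA) ). -/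

import Mathlib

/-!
Write `G = AᵀA`, `M = (1/k)(BA)ᵀ(BA)` and `c = χ/2 ≤ 1/2`. On the diagonal `u = v`, the first
sketching condition says `|vᵀ(M - G)v| ≤ c · vᵀGv`, so `(1 - c) G ⪯ M ⪯ (1 + c) G`
(`sketch_gram_bounds`). In particular `M` is positive definite, and both Loewner bounds follow
because inversion reverses the Loewner order (`inv_quadForm_anti`).

For the last bound let `w = M⁻¹v = k ((BA)ᵀ(BA))⁻¹v` and `q = wᵀGw`. Then
`(1 - c) q ≤ wᵀMw = ⟨w, v⟩ ≤ ‖w‖ ‖v‖`, while `λ_min(G) ‖w‖² ≤ q` (`lambdaMin_mul_le`); squaring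
and cancelling `q` gives the claim (`quadForm_inv_le`).

If `k = 0` then `1/k = 0` in Lean and the first condition forces `A v = 0` for all `v`, so that
`d = 0`, where every assertion is trivial (`k_pos`).
-/

open Matrix

noncomputable def norm2 {ι : Type*} [Fintype ι] (v : ι → ℝ) : ℝ :=
  Real.sqrt (∑ i, v i ^ 2)

/-- Smallest eigenvalue of a Hermitian (symmetric) real matrix; junk value `0` otherwise. -/
noncomputable def lambdaMin {d : ℕ} (A : Matrix (Fin d) (Fin d) ℝ) : ℝ :=
  @dite _ A.IsHermitian (Classical.dec _) (fun h => ⨅ i, h.eigenvalues i) (fun _ => 0)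

/-- `S` is a `χ`-embedding sketch for `A`. -/
def IsEmbeddingSketch {n d k : ℕ} (χ : ℝ) (A : Matrix (Fin n) (Fin d) ℝ)
    (S : Matrix (Fin k) (Fin n) ℝ) : Prop :=
  (∀ u v : Fin d → ℝ,
      |u ⬝ᵥ (Aᵀ * ((1 / (k : ℝ)) • (Sᵀ * S) - 1) * A).mulVec v| ≤
        (χ / 2) * norm2 (A.mulVec u) * norm2 (A.mulVec v)) ∧
  (∀ v : Fin d → ℝ,
      (1 - χ) * (k : ℝ) * norm2 (A.mulVec v) ^ 2 ≤ norm2 ((S * A).mulVec v) ^ 2)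

theorem norm2_sq {ι : Type*} [Fintype ι] (v : ι → ℝ) : norm2 v ^ 2 = v ⬝ᵥ v := by
  unfold norm2
  rw [Real.sq_sqrt (Finset.sum_nonneg fun i _ => sq_nonneg (v i))]
  simp [dotProduct, sq]

theorem norm2_mulVec_sq {n d : ℕ} (A : Matrix (Fin n) (Fin d) ℝ) (v : Fin d → ℝ) :
    norm2 (A.mulVec v) ^ 2 = v ⬝ᵥ (Aᵀ * A).mulVec v := by
  rw [norm2_sq, ← mulVec_mulVec, dotProduct_mulVec v, vecMul_transpose]

/-- The first sketching condition at `u = v`, as two-sided bounds on quadratic forms. -/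
theorem sketch_gram_bounds {n d k : ℕ} {χ : ℝ} {A : Matrix (Fin n) (Fin d) ℝ}
    {B : Matrix (Fin k) (Fin n) ℝ} (hB : IsEmbeddingSketch χ A B) (v : Fin d → ℝ) :
    (1 - χ / 2) * (v ⬝ᵥ (Aᵀ * A).mulVec v) ≤
        v ⬝ᵥ ((1 / (k : ℝ)) • ((B * A)ᵀ * (B * A))).mulVec v ∧
      v ⬝ᵥ ((1 / (k : ℝ)) • ((B * A)ᵀ * (B * A))).mulVec v ≤
        (1 + χ / 2) * (v ⬝ᵥ (Aᵀ * A).mulVec v) := by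
  have h := hB.1 v v
  have e : Aᵀ * ((1 / (k : ℝ)) • (Bᵀ * B) - 1) * A =
      (1 / (k : ℝ)) • ((B * A)ᵀ * (B * A)) - Aᵀ * A := by
    rw [Matrix.mul_sub, Matrix.sub_mul, Matrix.mul_one, Matrix.mul_smul, Matrix.smul_mul,
      transpose_mul]
    simp only [Matrix.mul_assoc]
  rw [e, sub_mulVec, dotProduct_sub, mul_assoc, ← sq, norm2_mulVec_sq] at h
  obtain ⟨h1, h2⟩ := abs_le.mp h
  constructor <;> linarith

/-- In positive dimension a sketch has at least one row: for `k = 0` the rescaled Gram matrix is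
`0`, which contradicts its lower bound by a positive multiple of `AᵀA`. -/
theorem k_pos {n d k : ℕ} {χ : ℝ} (hχ1 : χ ≤ 1) {A : Matrix (Fin n) (Fin d) ℝ}
    (hA : (Aᵀ * A).PosDef) {B : Matrix (Fin k) (Fin n) ℝ} (hB : IsEmbeddingSketch χ A B)
    [Nonempty (Fin d)] : 0 < k := by
  rcases Nat.eq_zero_or_pos k with rfl | h
  · have h1 := (sketch_gram_bounds hB (fun _ => 1)).1
    have h2 := hA.dotProduct_mulVec_pos (x := fun _ => 1)
      (fun h => one_ne_zero (congrFun h (Classical.arbitrary _)))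
    simp only [star_trivial] at h2
    simp only [Nat.cast_zero, div_zero, zero_smul, zero_mulVec, dotProduct_zero] at h1
    nlinarith
  · exact h

theorem dotProduct_mulVec_comm {d : ℕ} {P : Matrix (Fin d) (Fin d) ℝ} (hP : P.IsHermitian)
    (x y : Fin d → ℝ) : x ⬝ᵥ P.mulVec y = y ⬝ᵥ P.mulVec x := by
  have h : Pᵀ = P := by simpa [IsHermitian, conjTranspose_eq_transpose_of_trivial] using hP
  rw [dotProduct_mulVec, ← mulVec_transpose, h, dotProduct_comm]

theorem mulVec_inv_mulVec {d : ℕ} {P : Matrix (Fin d) (Fin d) ℝ} (hP : P.PosDef)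
    (x : Fin d → ℝ) : P.mulVec (P⁻¹.mulVec x) = x := by
  rw [mulVec_mulVec, mul_nonsing_inv _ ((isUnit_iff_isUnit_det _).mp hP.isUnit), one_mulVec]

/-- Inversion reverses the Loewner order on positive definite matrices. With `y = Q⁻¹x` and
`z = P⁻¹x`, this is `0 ≤ (z - y)ᵀP(z - y)` combined with `yᵀPy ≤ yᵀQy`. -/
theorem inv_quadForm_anti {d : ℕ} {P Q : Matrix (Fin d) (Fin d) ℝ} (hP : P.PosDef) (hQ : Q.PosDef)
    (hPQ : ∀ v, v ⬝ᵥ P.mulVec v ≤ v ⬝ᵥ Q.mulVec v) : (P⁻¹ - Q⁻¹).PosSemidef := by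
  refine .of_dotProduct_mulVec_nonneg (hP.inv.isHermitian.sub hQ.inv.isHermitian) fun x => ?_
  simp only [star_trivial]
  have hz := mulVec_inv_mulVec hP x
  have hy := mulVec_inv_mulVec hQ x
  have h2 := hPQ (Q⁻¹.mulVec x)
  have h1 := hP.posSemidef.dotProduct_mulVec_nonneg (P⁻¹.mulVec x - Q⁻¹.mulVec x)
  rw [hy] at h2
  have h3 := dotProduct_mulVec_comm hP.isHermitian (P⁻¹.mulVec x) (Q⁻¹.mulVec x)
  rw [hz] at h3
  simp only [star_trivial, mulVec_sub, dotProduct_sub, sub_dotProduct, hz, h3] at h1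
  rw [sub_mulVec, dotProduct_sub, dotProduct_comm x, dotProduct_comm x]
  linarith

theorem lambdaMin_eq {d : ℕ} {G : Matrix (Fin d) (Fin d) ℝ} (hG : G.IsHermitian) :
    lambdaMin G = ⨅ i, hG.eigenvalues i := by
  unfold lambdaMin
  rw [dif_pos hG]

theorem lambdaMin_pos {d : ℕ} [Nonempty (Fin d)] {G : Matrix (Fin d) (Fin d) ℝ} (hG : G.PosDef) :
    0 < lambdaMin G := by
  rw [lambdaMin_eq hG.isHermitian]
  obtain ⟨i, hi⟩ := exists_eq_ciInf_of_finite (f := hG.isHermitian.eigenvalues)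
  rw [← hi]
  exact hG.eigenvalues_pos i

/-- Rayleigh's inequality: every eigenvalue of `G - λ_min(G) I` is nonnegative. -/
theorem lambdaMin_mul_le {d : ℕ} {G : Matrix (Fin d) (Fin d) ℝ} (hG : G.IsHermitian)
    (w : Fin d → ℝ) : lambdaMin G * (w ⬝ᵥ w) ≤ w ⬝ᵥ G.mulVec w := by
  have hH : (G - algebraMap ℝ _ (lambdaMin G)).IsHermitian := by
    refine hG.sub ?_
    rw [algebraMap_eq_diagonal]
    exact isHermitian_diagonal _
  have h : (G - algebraMap ℝ _ (lambdaMin G)).PosSemidef := by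
    refine hH.posSemidef_iff_eigenvalues_nonneg.mpr fun i => ?_
    have hi := hH.eigenvalues_mem_spectrum_real i
    rw [← spectrum.add_mem_add_iff (s := lambdaMin G), add_sub_cancel,
      hG.spectrum_real_eq_range_eigenvalues] at hi
    obtain ⟨j, hj⟩ := hi
    have := ciInf_le (Set.finite_range hG.eigenvalues).bddBelow j
    rw [hj, ← lambdaMin_eq hG] at this
    simpa using this
  have := h.dotProduct_mulVec_nonneg w
  rw [Algebra.algebraMap_eq_smul_one, sub_mulVec, smul_mulVec, one_mulVec, dotProduct_sub,
    dotProduct_smul, star_trivial, smul_eq_mul] at this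
  linarith

/-- If `a G ⪯ M` with `a > 0`, then `w = M⁻¹v` satisfies `wᵀGw ≤ ‖v‖² / (a² λ_min(G))`. -/
theorem quadForm_inv_le {d : ℕ} [Nonempty (Fin d)] {G M : Matrix (Fin d) (Fin d) ℝ}
    (hG : G.PosDef) (hM : M.PosDef) {a : ℝ} (ha : 0 < a)
    (hGM : ∀ v, a * (v ⬝ᵥ G.mulVec v) ≤ v ⬝ᵥ M.mulVec v) (v : Fin d → ℝ) :
    M⁻¹.mulVec v ⬝ᵥ G.mulVec (M⁻¹.mulVec v) ≤ norm2 v ^ 2 / (a ^ 2 * lambdaMin G) := by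
  have hl := lambdaMin_pos hG
  set w := M⁻¹.mulVec v with hw
  have h1 := hGM w
  have hwv : M.mulVec w = v := mulVec_inv_mulVec hM v
  rw [hwv] at h1
  have h2 := lambdaMin_mul_le hG.isHermitian w
  have hq : 0 ≤ w ⬝ᵥ G.mulVec w := by
    simpa using hG.posSemidef.dotProduct_mulVec_nonneg w
  have hcs : (w ⬝ᵥ v) ^ 2 ≤ (w ⬝ᵥ w) * (v ⬝ᵥ v) := by
    simpa [dotProduct, sq] using Finset.sum_mul_sq_le_sq_mul_sq Finset.univ w v
  have hv : 0 ≤ v ⬝ᵥ v := by simpa using dotProduct_star_self_nonneg v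
  rw [norm2_sq, le_div_iff₀ (by positivity)]
  generalize w ⬝ᵥ G.mulVec w = q at *
  rcases hq.eq_or_lt with rfl | hq
  · simpa using hv
  have h3 : (a * q) ^ 2 ≤ (w ⬝ᵥ w) * (v ⬝ᵥ v) :=
    (pow_le_pow_left₀ (by positivity) h1 2).trans hcs
  have h4 : lambdaMin G * (a * q) ^ 2 ≤ q * (v ⬝ᵥ v) :=
    calc lambdaMin G * (a * q) ^ 2 ≤ lambdaMin G * ((w ⬝ᵥ w) * (v ⬝ᵥ v)) := by gcongr
      _ = (lambdaMin G * (w ⬝ᵥ w)) * (v ⬝ᵥ v) := by ring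
      _ ≤ q * (v ⬝ᵥ v) := by gcongr
  refine le_of_mul_le_mul_left ?_ hq
  linarith

theorem inv_smul_matrix {d : ℕ} (P : Matrix (Fin d) (Fin d) ℝ) (hP : P.PosDef) {a : ℝ}
    (ha : 0 < a) : (a • P)⁻¹ = (1 / a) • P⁻¹ := by
  apply inv_eq_right_inv
  rw [smul_mul_smul_comm, mul_one_div_cancel ha.ne',
    mul_nonsing_inv _ ((isUnit_iff_isUnit_det _).mp hP.isUnit), one_smul]

theorem stmt14 {n d k : ℕ} (χ : ℝ) (hχ0 : 0 < χ) (hχ1 : χ ≤ 1)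
    (A : Matrix (Fin n) (Fin d) ℝ) (hA : (Aᵀ * A).PosDef)
    (B : Matrix (Fin k) (Fin n) ℝ) (hB : IsEmbeddingSketch χ A B) :
    (((1 / (k : ℝ)) • ((B * A)ᵀ * (B * A)))⁻¹ -
        (1 / (1 + χ / 2)) • (Aᵀ * A)⁻¹).PosSemidef ∧
    ((1 / (1 - χ / 2)) • (Aᵀ * A)⁻¹ -
        ((1 / (k : ℝ)) • ((B * A)ᵀ * (B * A)))⁻¹).PosSemidef ∧
    (∀ v : Fin d → ℝ,
      (k : ℝ) ^ 2 *
          ((((B * A)ᵀ * (B * A))⁻¹.mulVec v) ⬝ᵥ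
            (Aᵀ * A).mulVec (((B * A)ᵀ * (B * A))⁻¹.mulVec v)) ≤
        norm2 v ^ 2 / ((1 - χ / 2) ^ 2 * lambdaMin (Aᵀ * A))) := by
  rcases isEmpty_or_nonempty (Fin d) with hd | hd
  · refine ⟨?_, ?_, fun v => ?_⟩
    · rw [Subsingleton.elim (_ - _) 0]; exact .zero
    · rw [Subsingleton.elim (_ - _) 0]; exact .zero
    · -- Here `λ_min` is an infimum over the empty set, hence `0`, and both sides vanish.
      simp [norm2, dotProduct]
  have hk : (0 : ℝ) < k := by exact_mod_cast k_pos hχ1 hA hB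
  have ha : 0 < 1 - χ / 2 := by linarith
  have hb : 0 < 1 + χ / 2 := by linarith
  have hbd := sketch_gram_bounds hB
  have hM : ((1 / (k : ℝ)) • ((B * A)ᵀ * (B * A))).PosDef := by
    refine .of_dotProduct_mulVec_pos ?_ fun x hx => ?_
    · exact ((posSemidef_conjTranspose_mul_self (B * A)).smul
        (one_div_nonneg.mpr hk.le)).isHermitian
    · have := hA.dotProduct_mulVec_pos hx
      exact (mul_pos ha this).trans_le (hbd x).1
  refine ⟨?_, ?_, fun v => ?_⟩
  · rw [← inv_smul_matrix _ hA hb]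
    refine inv_quadForm_anti hM (hA.smul hb) fun v => ?_
    simpa [smul_mulVec] using (hbd v).2
  · rw [← inv_smul_matrix _ hA ha]
    refine inv_quadForm_anti (hA.smul ha) hM fun v => ?_
    simpa [smul_mulVec] using (hbd v).1
  · have h := quadForm_inv_le hA hM ha (fun v => (hbd v).1) v
    have hH : ((B * A)ᵀ * (B * A)).PosDef := by
      have := hM.smul hk
      rwa [smul_smul, mul_one_div_cancel hk.ne', one_smul] at this
    rw [inv_smul_matrix _ hH (one_div_pos.mpr hk), one_div_one_div, smul_mulVec, mulVec_smul,
      smul_dotProduct, dotProduct_smul, smul_eq_mul, smul_eq_mul] at h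
    calc _ = _ := by ring
      _ ≤ _ := h
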